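/- arXiv:2307.12110 — 2 statements merged into one kernel-verified Lean document; each statement's English description precedes it below -/
import Mathlib

section
/- For every k with 0 ≤ k ≤ p − 2, one has h_{k+1} = h_k − 1 if and only if c(k + 1 + h_k) < h_k. (Proposition 4.7, second equivalence.) -/
/-- The shifted h-index of order `k`: the largest `m` with `1 ≤ m ≤ p - k` and
`c (k + m) ≥ m` (the Hirsch h-index of the tail sequence `c (k+1), …, c p`).
Taken as the `sup` of the (finite) set of such `m`, which equals its maximum
when the set is nonempty and is `0` otherwise. -/
def hIdx (p : ℕ) (c : ℕ → ℕ) (k : ℕ) : ℕ :=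
  ((Finset.Icc 1 (p - k)).filter (fun m => m ≤ c (k + m))).sup id

/-- The shifted core sum `N_k = Σ_{j=k+1}^{k+h_k} c j`. -/
def coreSum (p : ℕ) (c : ℕ → ℕ) (k : ℕ) : ℕ :=
  ∑ j ∈ Finset.Icc (k + 1) (k + hIdx p c k), c j

/-- The shifted e-index `e_k = √(N_k − h_k²)`. -/
noncomputable def eIdx (p : ℕ) (c : ℕ → ℕ) (k : ℕ) : ℝ :=
  Real.sqrt ((coreSum p c k : ℝ) - (hIdx p c k : ℝ) ^ 2)

/-!
For a nonincreasing sequence, `m ≤ h_k` is equivalent to `m ≤ c (k + m)`, so `h_{k+1} < h_k` says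
exactly that `c (k + 1 + h_k) < h_k`. Deleting the leading term of a sequence lowers its h-index by
at most one, so `h_{k+1} < h_k` is also the same as `h_{k+1} = h_k - 1`.
-/

section

variable {p : ℕ} {c : ℕ → ℕ} {k m : ℕ}

theorem le_hIdx (hkm : k + m ≤ p) (hm : m ≤ c (k + m)) : m ≤ hIdx p c k := by
  rcases m.eq_zero_or_pos with rfl | hm_pos
  · exact Nat.zero_le _
  · exact Finset.le_sup (f := id)
      (Finset.mem_filter.2 ⟨Finset.mem_Icc.2 ⟨hm_pos, by omega⟩, hm⟩)

theorem hIdx_le_sub (p : ℕ) (c : ℕ → ℕ) (k : ℕ) : hIdx p c k ≤ p - k :=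
  Finset.sup_le fun _ hm => (Finset.mem_Icc.1 (Finset.mem_filter.1 hm).1).2

theorem hIdx_le_apply_add_hIdx (p : ℕ) (c : ℕ → ℕ) (k : ℕ) :
    hIdx p c k ≤ c (k + hIdx p c k) :=
  Finset.sup_induction (p := fun m => m ≤ c (k + m)) (Nat.zero_le _)
    (fun a ha b hb => by rcases max_choice a b with h | h <;> rwa [h])
    (fun _ hm => (Finset.mem_filter.1 hm).2)

theorem hIdx_le_hIdx_succ_add_one (p : ℕ) (c : ℕ → ℕ) (k : ℕ) :
    hIdx p c k ≤ hIdx p c (k + 1) + 1 := by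
  rcases (hIdx p c k).eq_zero_or_pos with h_zero | h_pos
  · omega
  · have h_le_sub := hIdx_le_sub p c k
    have h_le_apply := hIdx_le_apply_add_hIdx p c k
    have index_eq : k + 1 + (hIdx p c k - 1) = k + hIdx p c k := by omega
    have pred_le : hIdx p c k - 1 ≤ hIdx p c (k + 1) :=
      le_hIdx (by omega) (by rw [index_eq]; omega)
    omega

theorem le_hIdx_iff (hanti : AntitoneOn c (Set.Ioc k p)) (hzero : ∀ j, p < j → c j = 0) :
    m ≤ hIdx p c k ↔ m ≤ c (k + m) := by
  constructor
  · intro hm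
    rcases m.eq_zero_or_pos with rfl | hm_pos
    · exact Nat.zero_le _
    · have h_le_sub := hIdx_le_sub p c k
      calc
        m ≤ hIdx p c k := hm
        _ ≤ c (k + hIdx p c k) := hIdx_le_apply_add_hIdx p c k
        _ ≤ c (k + m) := hanti ⟨by omega, by omega⟩ ⟨by omega, by omega⟩ (by omega)
  · intro hm
    rcases le_or_gt (k + m) p with hkm | hkm
    · exact le_hIdx hkm hm
    · rw [hzero _ hkm] at hm
      exact hm.trans (Nat.zero_le _)

theorem hIdx_lt_iff (hanti : AntitoneOn c (Set.Ioc k p)) (hzero : ∀ j, p < j → c j = 0) :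
    hIdx p c k < m ↔ c (k + m) < m :=
  lt_iff_lt_of_le_iff_le (le_hIdx_iff hanti hzero)

theorem stmt_2_general (hanti : AntitoneOn c (Set.Ioc (k + 1) p))
    (hzero : ∀ j, p < j → c j = 0) (h_pos : 0 < hIdx p c k) :
    hIdx p c (k + 1) = hIdx p c k - 1 ↔ c (k + 1 + hIdx p c k) < hIdx p c k := by
  have drop_le_one := hIdx_le_hIdx_succ_add_one p c k
  calc
    hIdx p c (k + 1) = hIdx p c k - 1 ↔ hIdx p c (k + 1) < hIdx p c k := by omega
    _ ↔ c (k + 1 + hIdx p c k) < hIdx p c k := hIdx_lt_iff hanti hzero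

end

theorem stmt_2 (p : ℕ) (hp : 1 ≤ p) (c : ℕ → ℕ)
    (hmono : ∀ i j, 1 ≤ i → i ≤ j → j ≤ p → c j ≤ c i)
    (hpos : ∀ j, 1 ≤ j → j ≤ p → 1 ≤ c j)
    (hzero : ∀ j, p < j → c j = 0)
    (k : ℕ) (hk : k + 2 ≤ p) :
    hIdx p c (k + 1) = hIdx p c k - 1 ↔ c (k + 1 + hIdx p c k) < hIdx p c k := by
  have hanti : AntitoneOn c (Set.Ioc (k + 1) p) := fun i hi j hj hij =>
    hmono i j (Nat.one_le_of_lt hi.1) hij hj.2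
  exact stmt_2_general hanti hzero (le_hIdx (by omega) (hpos (k + 1) (by omega) (by omega)))
end

section
/- Suppose 0 ≤ k ≤ p − 2, e_k < h_k, and h_{k+1} = h_k − 1 (equivalently, c(k + 1 + h_k) < h_k). Then e_{k+1} ≥ h_{k+1} if and only if N_k ≥ 2·h_k² − 4·h_k + c(k+1) + 2 (equivalently, e_k² ≥ h_k² − 4·h_k + c(k+1) + 2). (Proposition 4.10(ii).) -/
/-!
After squaring, `e_k ≥ h_k` says `N_k ≥ 2 h_k ^ 2`. When the h-index drops by exactly one from
`k` to `k + 1`, both cores end at the same index, so `N_k = c (k + 1) + N_{k+1}`. The criterion is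
then `N_{k+1} ≥ 2 (h_k - 1) ^ 2`, with `c (k + 1)` added to both sides.
-/

section

variable {p k : ℕ} {c : ℕ → ℕ}

theorem hIdx_pos (hk : k < p) (hc : 1 ≤ c (k + 1)) : 0 < hIdx p c k := by
  have one_mem : 1 ∈ (Finset.Icc 1 (p - k)).filter (fun m => m ≤ c (k + m)) := by
    simp only [Finset.mem_filter, Finset.mem_Icc]
    exact ⟨⟨le_rfl, by lia⟩, hc⟩
  exact Finset.le_sup (f := id) one_mem

theorem hIdx_le_eIdx_iff :
    (hIdx p c k : ℝ) ≤ eIdx p c k ↔ 2 * hIdx p c k ^ 2 ≤ coreSum p c k := by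
  rcases Nat.eq_zero_or_pos (hIdx p c k) with hzero | hpos
  · simp [eIdx, hzero]
  · rw [eIdx, Real.le_sqrt' (by exact_mod_cast hpos), le_sub_iff_add_le, ← two_mul]
    exact_mod_cast Iff.rfl

theorem coreSum_eq_add_coreSum_succ (hh : hIdx p c k = hIdx p c (k + 1) + 1) :
    coreSum p c k = c (k + 1) + coreSum p c (k + 1) := by
  have same_end : k + hIdx p c k = k + 1 + hIdx p c (k + 1) := by lia
  rw [coreSum, coreSum, same_end,
    ← Finset.insert_Icc_add_one_left_eq_Icc (Nat.le_add_right (k + 1) _),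
    Finset.sum_insert (by simp)]

theorem stmt_13_general (hh : hIdx p c k = hIdx p c (k + 1) + 1) :
    (hIdx p c (k + 1) : ℝ) ≤ eIdx p c (k + 1) ↔
      2 * (hIdx p c k : ℤ) ^ 2 - 4 * hIdx p c k + c (k + 1) + 2 ≤
        (coreSum p c k : ℤ) := by
  have threshold : 2 * (hIdx p c k : ℤ) ^ 2 - 4 * hIdx p c k + c (k + 1) + 2 =
      c (k + 1) + 2 * (hIdx p c (k + 1) : ℤ) ^ 2 := by
    rw [hh]
    push_cast
    ring
  rw [hIdx_le_eIdx_iff, threshold, coreSum_eq_add_coreSum_succ hh, Nat.cast_add,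
    add_le_add_iff_left]
  exact_mod_cast Iff.rfl

end

theorem stmt_13 (p : ℕ) (hp : 1 ≤ p) (c : ℕ → ℕ)
    (hmono : ∀ i j, 1 ≤ i → i ≤ j → j ≤ p → c j ≤ c i)
    (hpos : ∀ j, 1 ≤ j → j ≤ p → 1 ≤ c j)
    (hzero : ∀ j, p < j → c j = 0)
    (k : ℕ) (hk : k + 2 ≤ p)
    (he : eIdx p c k < (hIdx p c k : ℝ))
    (hh : hIdx p c (k + 1) = hIdx p c k - 1) :
    (hIdx p c (k + 1) : ℝ) ≤ eIdx p c (k + 1) ↔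
      2 * (hIdx p c k : ℤ) ^ 2 - 4 * hIdx p c k + c (k + 1) + 2 ≤
        (coreSum p c k : ℤ) := by
  have hnext : 0 < hIdx p c (k + 1) := hIdx_pos (by lia) (hpos _ (by lia) hk)
  exact stmt_13_general (by lia)
end
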